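/- Let T and T' be triangulations of the same convex n-gon given in a linear representation with triangle-pair set Γ, let β ≥ 1, and let F be a flip sequence βT=T_0,…,T_ℓ=βT' with indirect pairs (Δ_1,Δ'_1),…,(Δ_{δ̄_F},Δ'_{δ̄_F}). Then for every i = 1,…,δ̄_F there exist a subgraph G(Δ_i,Δ'_i) of the triangulation T_{gone(Δ_i)}, a set K(Δ_i,Δ'_i) of edges of T_{gone(Δ_i)}, and an integer l_i, such that: (1) K(Δ_i,Δ'_i) consists of l_i edges of T_{gone(Δ_i)} whose endpoints are two non-consecutive vertices of V̄(Δ_i); (2) G(Δ_i,Δ'_i) contains β − l_i vertices of V(Δ_i), contains no edge of βT ∪ βT', and has at most 3n connected components; (3) K(Δ_i,Δ'_i) ∩ E(G(Δ_i,Δ'_i)) = ∅; and moreover for all i ≠ j: K(Δ_i,Δ'_i) ∩ E(G(Δ_j,Δ'_j)) = ∅ and K(Δ_i,Δ'_i) ∩ K(Δ_j,Δ'_j) = ∅. -/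

import Mathlib

/-!
Why the theorem holds. Let `p` be an indirect pair with spine edge `{a, a+1}`, let `S` be the
triangulation at time `gone p`, and let `[A, B]` be the interval of vertices `V̄(Δ)`, so that
`V(Δ)` is its interior. Call a vertex of `V(Δ)` *covered* if some chord of `S` with both ends in
`[A, B]` passes over it, and *visible* otherwise.

* A covered vertex `v` has a minimal chord over it; that chord is the long side of the triangle of
  `S` whose middle vertex is `v`, so different covered vertices get different chords
  (`exists_minCover`, `minCover_inj`). These chords form `K`.
* Two successive visible vertices `w < w'` are joined by an edge of `S` (`visible_adj`), and the
  triangle of `S` above this edge (`exists_apex`) has its apex outside `[A, B]`, for otherwise `w`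
  or `w'` would be covered. Hence the edges of `S` from visible vertices to vertices outside
  `[A, B]` form a graph `G` which, together with the visible vertices, is connected: one component
  suffices (`exists_witness`).

Since every vertex of `V(Δ)` is either covered or visible, `K` and `G` have the right sizes. In
`βT ∪ βT'` the only edges from `V(Δ)` to a vertex outside `[A, B]` are those of `Λ(Δ)` and `Λ(Δ')`
(`mem_fan_of_mem_blow`); at time `gone p` neither fan has an edge in `S`, because `p` is
indirect. Disjointness across pairs holds because distinct pairs have distinct spine edges
(`gamma_ext`), so their intervals share at most one vertex, an endpoint of both.
-/

/-!
Triangulations of a convex polygon whose vertices are labelled `0, 1, …, n-1`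
in order along the boundary (this labelling is the *linear representation*:
the vertices lie on the spine in this order, and the spine edges are the
boundary edges `{i, i+1}` for `0 ≤ i ≤ n-2`).
-/

/-- Two chords of a convex polygon cross: their endpoints interleave along the
boundary order. -/
def Crosses (e f : Finset ℕ) : Prop :=
  ∃ a b c d : ℕ, a < b ∧ c < d ∧ e = {a, b} ∧ f = {c, d} ∧
    ((a < c ∧ c < b ∧ b < d) ∨ (c < a ∧ a < d ∧ d < b))

/-- Boundary edges of the convex polygon with vertices `0, 1, …, n-1`. -/
def BoundaryEdge (n : ℕ) (e : Finset ℕ) : Prop :=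
  (∃ i : ℕ, i + 2 ≤ n ∧ e = {i, i + 1}) ∨ (2 ≤ n ∧ e = ({0, n - 1} : Finset ℕ))

/-- A chord of the convex `n`-gon: a 2-element subset of the vertex set. -/
def IsChord (n : ℕ) (e : Finset ℕ) : Prop :=
  e.card = 2 ∧ ∀ v ∈ e, v < n

/-- A triangulation of the convex `n`-gon: all boundary edges together with an
inclusion-maximal family of pairwise non-crossing diagonals. -/
def IsTriangulation (n : ℕ) (T : Set (Finset ℕ)) : Prop :=
  (∀ e ∈ T, IsChord n e) ∧
  (∀ e : Finset ℕ, BoundaryEdge n e → e ∈ T) ∧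
  (∀ e ∈ T, ∀ f ∈ T, ¬ Crosses e f) ∧
  (∀ e : Finset ℕ, IsChord n e → e ∉ T → ∃ f ∈ T, Crosses e f)

/-- `T'` is obtained from the triangulation `T` of the convex `n`-gon by a single
flip: one diagonal `e` of `T` is replaced by another diagonal `f` so that the
result is again a triangulation. -/
def Flip (n : ℕ) (T T' : Set (Finset ℕ)) : Prop :=
  IsTriangulation n T ∧ IsTriangulation n T' ∧
  ∃ e f : Finset ℕ, e ∈ T ∧ f ∉ T ∧ T' = insert f (T \ {e})

/-- A flip sequence of length `ℓ` from `T` to `T'` in the convex `n`-gon. -/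
def IsFlipSeq (n : ℕ) (T T' : Set (Finset ℕ)) (ℓ : ℕ) (g : ℕ → Set (Finset ℕ)) : Prop :=
  g 0 = T ∧ g ℓ = T' ∧ ∀ i, i < ℓ → Flip n (g i) (g (i + 1))

/-- The flip distance between two triangulations of the convex `n`-gon:
the minimal length of a flip sequence between them. -/
noncomputable def flipDist (n : ℕ) (T T' : Set (Finset ℕ)) : ℕ :=
  sInf {ℓ : ℕ | ∃ g : ℕ → Set (Finset ℕ), IsFlipSeq n T T' ℓ g}

/-- `{x, y, z}` is a triangle of the triangulation `T` (its three chords belong to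
`T`; for triangulations of a convex polygon this means it is a face). -/
def IsTriangle (T : Set (Finset ℕ)) (x y z : ℕ) : Prop :=
  x ≠ y ∧ y ≠ z ∧ x ≠ z ∧
  ({x, y} : Finset ℕ) ∈ T ∧ ({y, z} : Finset ℕ) ∈ T ∧ ({x, z} : Finset ℕ) ∈ T

/-- `p = (a, u, u')` encodes a triangle pair of `(T, T')`: the triangle
`{a, a+1, u}` of `T` and the triangle `{a, a+1, u'}` of `T'` share the spine edge
`{a, a+1}`, and each of the two triangles has exactly one edge on the spine
(the apex is not consecutive with the spine edge). -/
def IsTrianglePair (n : ℕ) (T T' : Set (Finset ℕ)) (p : ℕ × ℕ × ℕ) : Prop :=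
  p.1 + 2 ≤ n ∧ p.2.1 < n ∧ p.2.2 < n ∧
  IsTriangle T p.1 (p.1 + 1) p.2.1 ∧ IsTriangle T' p.1 (p.1 + 1) p.2.2 ∧
  p.2.1 + 1 ≠ p.1 ∧ p.2.1 ≠ p.1 + 2 ∧ p.2.2 + 1 ≠ p.1 ∧ p.2.2 ≠ p.1 + 2

/-- The set `Γ` of triangle pairs of `(T, T')`. -/
def Gamma (n : ℕ) (T T' : Set (Finset ℕ)) : Set (ℕ × ℕ × ℕ) :=
  {p | IsTrianglePair n T T' p}

/-- The left endpoints of the spine edges that carry a triangle pair. -/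
def leftSet (n : ℕ) (T T' : Set (Finset ℕ)) : Set ℕ :=
  {a : ℕ | ∃ u u' : ℕ, (a, u, u') ∈ Gamma n T T'}

/-- The embedding of the original vertices into the vertex set of the β-blow-up:
`β` new subdivision vertices are inserted inside each spine edge carrying a
triangle pair. -/
noncomputable def emb (n : ℕ) (T T' : Set (Finset ℕ)) (β : ℕ) (i : ℕ) : ℕ :=
  i + β * ({a ∈ leftSet n T T' | a < i}).ncard

/-- Number of vertices of the blown-up polygon. -/
noncomputable def blowSize (n : ℕ) (T T' : Set (Finset ℕ)) (β : ℕ) : ℕ :=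
  n + β * (Gamma n T T').ncard

/-- The set `V(Δ)` of the `β` new subdivision vertices of the spine edge of the
pair `p`, in the β-blow-up. -/
noncomputable def subVerts (n : ℕ) (T T' : Set (Finset ℕ)) (β : ℕ) (p : ℕ × ℕ × ℕ) : Set ℕ :=
  {v : ℕ | ∃ k : ℕ, 1 ≤ k ∧ k ≤ β ∧ v = emb n T T' β p.1 + k}

/-- The fan `Λ(Δ)` of the pair `p` in the β-blow-up of `T`: the `β` edges from
the apex of `Δ` to the subdivision vertices `V(Δ)`. -/
noncomputable def fanT (n : ℕ) (T T' : Set (Finset ℕ)) (β : ℕ) (p : ℕ × ℕ × ℕ) : Set (Finset ℕ) :=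
  {E | ∃ k : ℕ, 1 ≤ k ∧ k ≤ β ∧
    E = ({emb n T T' β p.2.1, emb n T T' β p.1 + k} : Finset ℕ)}

/-- The fan `Λ(Δ')` of the pair `p` in the β-blow-up of `T'`. -/
noncomputable def fanT' (n : ℕ) (T T' : Set (Finset ℕ)) (β : ℕ) (p : ℕ × ℕ × ℕ) : Set (Finset ℕ) :=
  {E | ∃ k : ℕ, 1 ≤ k ∧ k ≤ β ∧
    E = ({emb n T T' β p.2.2, emb n T T' β p.1 + k} : Finset ℕ)}

/-- The β-blow-up `βT` of `T`: images of the edges of `T` that are not subdivided,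
the subdivided boundary pieces, and the fans `Λ(Δ)`. -/
noncomputable def blowT (n : ℕ) (T T' : Set (Finset ℕ)) (β : ℕ) : Set (Finset ℕ) :=
  {E | ∃ i j : ℕ, ({i, j} : Finset ℕ) ∈ T ∧
      (¬ ∃ a ∈ leftSet n T T', ({i, j} : Finset ℕ) = {a, a + 1}) ∧
      E = ({emb n T T' β i, emb n T T' β j} : Finset ℕ)} ∪
  {E | ∃ a ∈ leftSet n T T', ∃ k : ℕ, k ≤ β ∧
      E = ({emb n T T' β a + k, emb n T T' β a + k + 1} : Finset ℕ)} ∪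
  ⋃ p ∈ Gamma n T T', fanT n T T' β p

/-- The β-blow-up `βT'` of `T'`. -/
noncomputable def blowT' (n : ℕ) (T T' : Set (Finset ℕ)) (β : ℕ) : Set (Finset ℕ) :=
  {E | ∃ i j : ℕ, ({i, j} : Finset ℕ) ∈ T' ∧
      (¬ ∃ a ∈ leftSet n T T', ({i, j} : Finset ℕ) = {a, a + 1}) ∧
      E = ({emb n T T' β i, emb n T T' β j} : Finset ℕ)} ∪
  {E | ∃ a ∈ leftSet n T T', ∃ k : ℕ, k ≤ β ∧
      E = ({emb n T T' β a + k, emb n T T' β a + k + 1} : Finset ℕ)} ∪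
  ⋃ p ∈ Gamma n T T', fanT' n T T' β p

/-- Crossing of two chords `{a,b}` and `{c,d}` of a "polygon" with vertices on the
rational line (used to express crossing of fan edges, whose subdivision endpoints
are represented by midpoints of spine edges). -/
def crossQ (a b c d : ℚ) : Prop :=
  (min a b < min c d ∧ min c d < max a b ∧ max a b < max c d) ∨
  (min c d < min a b ∧ min a b < max c d ∧ max c d < max a b)

/-- The directed edge `p → q` of the conflict graph `H(T,T')`: the fan edges of
`Λ(Δ_p)` (from the apex of `Δ_p` to the inside of its spine edge) cross the fan
edges of `Λ(Δ'_q)`. -/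
def ConflictEdge (n : ℕ) (T T' : Set (Finset ℕ)) (p q : ℕ × ℕ × ℕ) : Prop :=
  p ∈ Gamma n T T' ∧ q ∈ Gamma n T T' ∧ p ≠ q ∧
  crossQ (p.2.1 : ℚ) ((p.1 : ℚ) + 1 / 2) (q.2.2 : ℚ) ((q.1 : ℚ) + 1 / 2)

/-- `S` contains a directed cycle of the directed graph with edge relation `E`. -/
def HasDicycleIn {α : Type*} (E : α → α → Prop) (S : Set α) : Prop :=
  ∃ (k : ℕ) (f : ℕ → α), 0 < k ∧ (∀ i, i ≤ k → f i ∈ S) ∧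
    (∀ i, i < k → E (f i) (f (i + 1))) ∧ f k = f 0

/-- `ac(H)`: the maximum cardinality of a subset of `Γ` inducing no directed cycle
in the conflict graph `H(T,T')`. -/
noncomputable def acNum (n : ℕ) (T T' : Set (Finset ℕ)) : ℕ :=
  sSup {m : ℕ | ∃ S : Set (ℕ × ℕ × ℕ), S ⊆ Gamma n T T' ∧
    ¬ HasDicycleIn (ConflictEdge n T T') S ∧ S.ncard = m}

/-- `gone(Δ)` for the flip sequence `g`: the least index `t` such that `g t`
contains no edge of the fan `Λ(Δ)`. -/
noncomputable def gone (n : ℕ) (T T' : Set (Finset ℕ)) (β : ℕ)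
    (g : ℕ → Set (Finset ℕ)) (p : ℕ × ℕ × ℕ) : ℕ :=
  sInf {t : ℕ | ∀ E ∈ fanT n T T' β p, E ∉ g t}

/-- The pair `p` is *direct* with respect to the flip sequence `g`: some
triangulation `g a` with `a ≤ gone(Δ)` contains an edge of `Λ(Δ')`. -/
def DirectPair (n : ℕ) (T T' : Set (Finset ℕ)) (β : ℕ)
    (g : ℕ → Set (Finset ℕ)) (p : ℕ × ℕ × ℕ) : Prop :=
  ∃ a : ℕ, a ≤ gone n T T' β g p ∧ ∃ E ∈ fanT' n T T' β p, E ∈ g a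

/-- Reachability in the graph with vertex set `V` and edge set `Ed`. -/
def GReach (V : Set ℕ) (Ed : Set (Finset ℕ)) : ℕ → ℕ → Prop :=
  Relation.ReflTransGen (fun u v => u ∈ V ∧ v ∈ V ∧ ({u, v} : Finset ℕ) ∈ Ed)

/-- An *above* pair: both apexes lie to the left of the spine edge,
`u < u' < a < a+1`. -/
def AbovePair (p : ℕ × ℕ × ℕ) : Prop := p.2.1 < p.2.2 ∧ p.2.2 < p.1

/-- A *below* pair: both apexes lie to the right of the spine edge,
`a < a+1 < u < u'`. -/
def BelowPair (p : ℕ × ℕ × ℕ) : Prop := p.1 + 1 < p.2.1 ∧ p.2.1 < p.2.2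

/-- A *crossing* pair: `u' < a < a+1 < u`. -/
def CrossingPair (p : ℕ × ℕ × ℕ) : Prop := p.2.2 < p.1 ∧ p.1 + 1 < p.2.1

/-! ### Triangulations of an `N`-gon -/

section Triangulation

variable {N : ℕ} {S : Set (Finset ℕ)}

lemma pair_eq_of_lt {a b c d : ℕ} (hab : a < b) (hcd : c < d)
    (h : ({a, b} : Finset ℕ) = {c, d}) : a = c ∧ b = d := by
  have h1 : a ∈ ({c, d} : Finset ℕ) := h ▸ by simp
  have h2 : b ∈ ({c, d} : Finset ℕ) := h ▸ by simp
  simp only [Finset.mem_insert, Finset.mem_singleton] at h1 h2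
  omega

lemma IsTriangulation.not_cross (hS : IsTriangulation N S) {i j k l : ℕ}
    (h1 : ({i, j} : Finset ℕ) ∈ S) (h2 : ({k, l} : Finset ℕ) ∈ S)
    (hik : i < k) (hkj : k < j) (hjl : j < l) : False :=
  hS.2.2.1 _ h1 _ h2 ⟨i, j, k, l, by omega, by omega, rfl, rfl, Or.inl ⟨hik, hkj, hjl⟩⟩

/-- Maximality of a triangulation: a missing chord is crossed by an edge. -/
lemma IsTriangulation.exists_cross (hS : IsTriangulation N S) {i j : ℕ} (hij : i < j) (hj : j < N)
    (h : ({i, j} : Finset ℕ) ∉ S) :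
    ∃ c d, ({c, d} : Finset ℕ) ∈ S ∧ ((i < c ∧ c < j ∧ j < d) ∨ (c < i ∧ i < d ∧ d < j)) := by
  obtain ⟨f, hf, a, b, c, d, hab, hcd, he, rfl, hc⟩ := hS.2.2.2 {i, j}
    ⟨Finset.card_pair hij.ne, by
      intro v hv
      simp only [Finset.mem_insert, Finset.mem_singleton] at hv
      omega⟩ h
  obtain ⟨rfl, rfl⟩ := pair_eq_of_lt hij hab he
  exact ⟨c, d, hf, hc⟩

lemma IsTriangulation.lt_left (hS : IsTriangulation N S) {i j : ℕ}
    (h : ({i, j} : Finset ℕ) ∈ S) : i < N := (hS.1 _ h).2 _ (by simp)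

lemma IsTriangulation.lt_right (hS : IsTriangulation N S) {i j : ℕ}
    (h : ({i, j} : Finset ℕ) ∈ S) : j < N := (hS.1 _ h).2 _ (by simp)

lemma IsTriangulation.outer_mem (hS : IsTriangulation N S) (hN : 2 ≤ N) :
    ({0, N - 1} : Finset ℕ) ∈ S := hS.2.1 _ (Or.inr ⟨hN, rfl⟩)

/-- Every edge `{w, w'}` of a triangulation other than `{0, N-1}` bounds a triangle on its outer
side: the shortest edge properly enclosing `{w, w'}` is the longest side of that triangle. -/
lemma exists_apex (hS : IsTriangulation N S) {w w' : ℕ} (hw : 0 < w) (hww : w < w')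
    (h : ({w, w'} : Finset ℕ) ∈ S) :
    ∃ x, (x < w ∨ w' < x) ∧ ({w, x} : Finset ℕ) ∈ S ∧ ({w', x} : Finset ℕ) ∈ S := by
  have hw'N := hS.lt_right h
  have hex : ∃ d i j, j = i + d ∧ i ≤ w ∧ w' ≤ j ∧ w' - w < d ∧ ({i, j} : Finset ℕ) ∈ S :=
    ⟨N - 1, 0, N - 1, by omega, by omega, by omega, by omega, hS.outer_mem (by omega)⟩
  classical
  obtain ⟨i, j, hd, hiw, hwj, hlt, hij⟩ := Nat.find_spec hex
  have hmin : ∀ c d, c ≤ w → w' ≤ d → w' - w < d - c → d - c < j - i →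
      ({c, d} : Finset ℕ) ∉ S := by
    intro c d h1 h2 h3 h4 h5
    exact Nat.find_min hex (m := d - c) (by omega) ⟨c, d, by omega, h1, h2, h3, h5⟩
  by_cases h1 : i = w
  · subst h1
    refine ⟨j, Or.inr (by omega), hij, ?_⟩
    by_contra hn
    obtain ⟨c, d, hcd, h2 | h2⟩ := hS.exists_cross (by omega) (hS.lt_right hij) hn
    · exact hS.not_cross hij hcd (by omega) (by omega) (by omega)
    · rcases lt_trichotomy c i with h3 | h3 | h3
      · exact hS.not_cross hcd hij (by omega) (by omega) (by omega)
      · exact hmin c d (by omega) (by omega) (by omega) (by omega) hcd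
      · exact hS.not_cross h hcd (by omega) (by omega) (by omega)
  · have hiw' : ({i, w'} : Finset ℕ) ∈ S := by
      by_contra hn
      obtain ⟨c, d, hcd, h2 | h2⟩ := hS.exists_cross (by omega) (by omega) hn
      · rcases le_or_gt d j with h3 | h3
        · rcases le_or_gt c w with h4 | h4
          · exact hmin c d (by omega) (by omega) (by omega) (by omega) hcd
          · exact hS.not_cross h hcd (by omega) (by omega) (by omega)
        · exact hS.not_cross hij hcd (by omega) (by omega) (by omega)
      · exact hS.not_cross hcd hij (by omega) (by omega) (by omega)
    have hj : j = w' := by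
      by_contra hne
      exact hmin i w' (by omega) (by omega) (by omega) (by omega) hiw'
    subst hj
    refine ⟨i, Or.inl (by omega), ?_, by rwa [Finset.pair_comm]⟩
    rw [Finset.pair_comm]
    by_contra hn
    obtain ⟨c, d, hcd, h2 | h2⟩ := hS.exists_cross (by omega) (by omega) hn
    · rcases lt_trichotomy d j with h3 | h3 | h3
      · exact hS.not_cross hcd h (by omega) (by omega) (by omega)
      · exact hmin c d (by omega) (by omega) (by omega) (by omega) hcd
      · exact hS.not_cross hij hcd (by omega) (by omega) (by omega)
    · exact hS.not_cross hcd hij (by omega) (by omega) (by omega)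

/-! ### Covered and visible vertices of an interval -/

/-- The vertex `v` lies strictly below an edge of `S` with both ends in `[A, B]`. -/
def Covered (S : Set (Finset ℕ)) (A B v : ℕ) : Prop :=
  ∃ i j, A ≤ i ∧ i < v ∧ v < j ∧ j ≤ B ∧ ({i, j} : Finset ℕ) ∈ S

/-- `E` is an edge of `S` over `v` with both ends in `[A, B]`, of least length among these. -/
def MinCover (S : Set (Finset ℕ)) (A B v : ℕ) (E : Finset ℕ) : Prop :=
  ∃ i j, A ≤ i ∧ i < v ∧ v < j ∧ j ≤ B ∧ E = {i, j} ∧ E ∈ S ∧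
    ∀ c d, A ≤ c → c < v → v < d → d ≤ B → ({c, d} : Finset ℕ) ∈ S → j - i ≤ d - c

lemma exists_minCover {A B v : ℕ} (h : Covered S A B v) : ∃ E, MinCover S A B v E := by
  classical
  have hex : ∃ m i j, m = j - i ∧ A ≤ i ∧ i < v ∧ v < j ∧ j ≤ B ∧ ({i, j} : Finset ℕ) ∈ S := by
    obtain ⟨i, j, h⟩ := h
    exact ⟨j - i, i, j, rfl, h⟩
  obtain ⟨i, j, hm, h1, h2, h3, h4, h5⟩ := Nat.find_spec hex
  refine ⟨{i, j}, i, j, h1, h2, h3, h4, rfl, h5, ?_⟩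
  intro c d g1 g2 g3 g4 g5
  rw [← hm]
  exact Nat.find_min' hex ⟨c, d, rfl, g1, g2, g3, g4, g5⟩

/-- If `{i, j}` were minimal over both `v` and a later vertex `v'`, then `{v, j}`, which is an edge
of the triangulation by minimality over `v`, would be a shorter edge over `v'`. -/
lemma minCover_inj_aux (hS : IsTriangulation N S) {A B v v' : ℕ} {E : Finset ℕ}
    (h : MinCover S A B v E) (h' : MinCover S A B v' E) (hlt : v < v') : False := by
  obtain ⟨i, j, h1, h2, h3, h4, rfl, h5, h6⟩ := h
  obtain ⟨i', j', g1, g2, g3, g4, g0, -, g6⟩ := h'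
  obtain ⟨rfl, rfl⟩ := pair_eq_of_lt (by omega) (by omega) g0
  have hvj : ({v, j} : Finset ℕ) ∈ S := by
    by_contra hn
    obtain ⟨c, d, hcd, h | h⟩ := hS.exists_cross (by omega) (hS.lt_right h5) hn
    · exact hS.not_cross h5 hcd (by omega) (by omega) (by omega)
    · rcases lt_or_ge c i with hc | hc
      · exact hS.not_cross hcd h5 (by omega) (by omega) (by omega)
      · have := h6 c d (by omega) (by omega) (by omega) (by omega) hcd
        omega
  have := g6 v j (by omega) hlt g3 g4 hvj
  omega

lemma minCover_inj (hS : IsTriangulation N S) {A B v v' : ℕ} {E : Finset ℕ}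
    (h : MinCover S A B v E) (h' : MinCover S A B v' E) : v = v' := by
  rcases lt_trichotomy v v' with hlt | heq | hlt
  · exact (minCover_inj_aux hS h h' hlt).elim
  · exact heq
  · exact (minCover_inj_aux hS h' h hlt).elim

/-- Two visible vertices with only covered vertices between them are adjacent. -/
lemma visible_adj (hS : IsTriangulation N S) {A B w w' : ℕ} (hB : w' < B)
    (hBN : B < N) (hww : w < w') (hw : ¬ Covered S A B w) (hw' : ¬ Covered S A B w')
    (hbetween : ∀ v, w < v → v < w' → Covered S A B v) : ({w, w'} : Finset ℕ) ∈ S := by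
  -- an end `v` of a crossing edge strictly between `w` and `w'` is covered, and the edge over it
  -- stays within `[w, w']`
  have key : ∀ v, w < v → v < w' → ∃ i j, w ≤ i ∧ i < v ∧ v < j ∧ j ≤ w' ∧
      ({i, j} : Finset ℕ) ∈ S := by
    intro v h1 h2
    obtain ⟨i, j, g1, g2, g3, g4, g5⟩ := hbetween v h1 h2
    refine ⟨i, j, ?_, g2, g3, ?_, g5⟩
    · by_contra hc
      exact hw ⟨i, j, g1, by omega, by omega, g4, g5⟩
    · by_contra hc
      exact hw' ⟨i, j, g1, by omega, by omega, g4, g5⟩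
  by_contra hn
  obtain ⟨c, d, hcd, h | h⟩ := hS.exists_cross hww (by omega) hn
  · obtain ⟨i, j, g1, g2, g3, g4, g5⟩ := key c (by omega) (by omega)
    exact hS.not_cross g5 hcd g2 g3 (by omega)
  · obtain ⟨i, j, g1, g2, g3, g4, g5⟩ := key d (by omega) (by omega)
    exact hS.not_cross hcd g5 (by omega) g2 g3

/-- Successive visible vertices have a common neighbour outside the interval. -/
lemma visible_common_nbr (hS : IsTriangulation N S) {A B w w' : ℕ} (hA : A < w) (hB : w' < B)
    (hBN : B < N) (hww : w < w') (hw : ¬ Covered S A B w) (hw' : ¬ Covered S A B w')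
    (hbetween : ∀ v, w < v → v < w' → Covered S A B v) :
    ∃ x, (x < A ∨ B < x) ∧ ({w, x} : Finset ℕ) ∈ S ∧ ({w', x} : Finset ℕ) ∈ S := by
  obtain ⟨x, hx, h1, h2⟩ := exists_apex hS (by omega) hww
    (visible_adj hS hB hBN hww hw hw' hbetween)
  refine ⟨x, ?_, h1, h2⟩
  by_contra hc
  rcases hx with hx | hx
  · exact hw ⟨x, w', by omega, hx, hww, by omega, by rwa [Finset.pair_comm]⟩
  · exact hw' ⟨w, x, by omega, hww, hx, by omega, h1⟩

/-- The sets `K` and `G` for one interval `[A, B]` of vertices of a single triangulation: `K`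
consists of the minimal covers of the covered vertices, `G` of the edges from visible vertices to
vertices outside `[A, B]`. -/
lemma exists_witness (hS : IsTriangulation N S) {A B : ℕ} (hBN : B < N) :
    ∃ (VG : Set ℕ) (EG KK : Set (Finset ℕ)),
      KK ⊆ S ∧ (∀ E ∈ KK, ∃ i j, A ≤ i ∧ i + 1 < j ∧ j ≤ B ∧ E = {i, j}) ∧
      VG ⊆ {v | v < N} ∧ EG ⊆ S ∧ (∀ E ∈ EG, ∀ v ∈ E, v ∈ VG) ∧
      KK.ncard + (Set.Ioo A B ∩ VG).ncard = B - A - 1 ∧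
      (∀ E ∈ EG, ∃ w x, A < w ∧ w < B ∧ (x < A ∨ B < x) ∧ E = {w, x}) ∧
      ∃ reps : Set ℕ, reps ⊆ VG ∧ reps.ncard ≤ 1 ∧ ∀ v ∈ VG, ∃ r ∈ reps, GReach VG EG v r := by
  classical
  let Vis : Set ℕ := {v | v ∈ Set.Ioo A B ∧ ¬ Covered S A B v}
  let Cov : Set ℕ := {v | v ∈ Set.Ioo A B ∧ Covered S A B v}
  let EG : Set (Finset ℕ) := {E | ∃ w x, w ∈ Vis ∧ (x < A ∨ B < x) ∧ E = {w, x} ∧ E ∈ S}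
  let VG : Set ℕ := Vis ∪ {x | (x < A ∨ B < x) ∧ ∃ w ∈ Vis, ({w, x} : Finset ℕ) ∈ S}
  have hφ : ∀ v, ∃ E, Covered S A B v → MinCover S A B v E := by
    intro v
    by_cases hv : Covered S A B v
    · obtain ⟨E, hE⟩ := exists_minCover hv
      exact ⟨E, fun _ => hE⟩
    · exact ⟨∅, fun h => absurd h hv⟩
  choose φ hφ using hφ
  have hinj : Set.InjOn φ Cov := by
    intro v hv v' hv' heq
    exact minCover_inj hS (hφ v hv.2) (heq ▸ hφ v' hv'.2)
  have hedge : ∀ w x, w ∈ Vis → (x < A ∨ B < x) → ({w, x} : Finset ℕ) ∈ S →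
      w ∈ VG ∧ x ∈ VG ∧ ({w, x} : Finset ℕ) ∈ EG := fun w x hw hx h =>
    ⟨Or.inl hw, Or.inr ⟨hx, w, hw, h⟩, w, x, hw, hx, rfl, h⟩
  refine ⟨VG, EG, φ '' Cov, ?_, ?_, ?_, ?_, ?_, ?_, ?_, ?_⟩
  · rintro _ ⟨v, hv, rfl⟩
    obtain ⟨i, j, -, -, -, -, -, h, -⟩ := hφ v hv.2
    exact h
  · rintro _ ⟨v, hv, rfl⟩
    obtain ⟨i, j, h1, h2, h3, h4, h5, -, -⟩ := hφ v hv.2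
    exact ⟨i, j, h1, by omega, h4, h5⟩
  · rintro v (hv | ⟨-, w, -, hw⟩)
    · have := hv.1.2
      exact lt_trans this hBN
    · exact hS.lt_right hw
  · rintro _ ⟨w, x, -, -, -, h⟩
    exact h
  · rintro _ ⟨w, x, hw, hx, rfl, h⟩ v hv
    simp only [Finset.mem_insert, Finset.mem_singleton] at hv
    rcases hv with rfl | rfl
    · exact (hedge _ _ hw hx h).1
    · exact (hedge _ _ hw hx h).2.1
  · have hV : Set.Ioo A B ∩ VG = Vis := by
      ext v
      constructor
      · rintro ⟨⟨h1, h2⟩, hv | ⟨hv, -⟩⟩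
        · exact hv
        · omega
      · intro hv
        exact ⟨hv.1, Or.inl hv⟩
    have hU : Cov ∪ Vis = Set.Ioo A B := by
      ext v
      by_cases h : Covered S A B v <;> simp [Cov, Vis, h]
    have hfin : (Set.Ioo A B).Finite := Set.finite_Ioo A B
    have hdis : Disjoint Cov Vis := by
      rw [Set.disjoint_left]
      exact fun v h h' => h'.2 h.2
    rw [hV, hinj.ncard_image, ← Set.ncard_union_eq hdis
      (hfin.subset fun v h => h.1) (hfin.subset fun v h => h.1), hU, ← Finset.coe_Ioo,
      Set.ncard_coe_finset, Nat.card_Ioo]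
  · rintro _ ⟨w, x, hw, hx, rfl, -⟩
    exact ⟨w, x, hw.1.1, hw.1.2, hx, rfl⟩
  · by_cases hne : ∃ v, v ∈ Vis
    · -- every visible vertex reaches the least one, `r`
      obtain ⟨hr, hrmin⟩ : Nat.find hne ∈ Vis ∧ ∀ v ∈ Vis, Nat.find hne ≤ v :=
        ⟨Nat.find_spec hne, fun v hv => Nat.find_min' hne hv⟩
      set r := Nat.find hne
      have hreach : ∀ v, v ∈ Vis → GReach VG EG v r := by
        intro v
        induction v using Nat.strong_induction_on with
        | _ v ih =>
          intro hv
          by_cases hvr : v = r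
          · rw [hvr]
            exact Relation.ReflTransGen.refl
          · have hrv : r < v := lt_of_le_of_ne (hrmin v hv) (Ne.symm hvr)
            -- `w` is the last visible vertex before `v`
            have hs : ((Finset.range v).filter (· ∈ Vis)).Nonempty := ⟨r, by simp [hrv, hr]⟩
            obtain ⟨w, hw, hwmax⟩ := Finset.exists_max_image _ id hs
            simp only [Finset.mem_filter, Finset.mem_range, id] at hw hwmax
            obtain ⟨x, hx, h1, h2⟩ := visible_common_nbr hS hw.2.1.1 hv.1.2 hBN hw.1 hw.2.2 hv.2
              (fun y hy hy' => by
                by_contra hc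
                have := hwmax y ⟨hy', ⟨⟨lt_trans hw.2.1.1 hy, lt_trans hy' hv.1.2⟩, hc⟩⟩
                omega)
            obtain ⟨a1, a2, a3⟩ := hedge _ _ hw.2 hx h1
            obtain ⟨b1, b2, b3⟩ := hedge _ _ hv hx h2
            refine Relation.ReflTransGen.head ⟨b1, b2, b3⟩
              (Relation.ReflTransGen.head ⟨a2, a1, ?_⟩ (ih w hw.1 hw.2))
            rwa [Finset.pair_comm]
      refine ⟨{r}, Set.singleton_subset_iff.2 (Or.inl hr), by simp, ?_⟩
      rintro v (hv | ⟨hx, w, hw, h⟩)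
      · exact ⟨r, rfl, hreach v hv⟩
      · obtain ⟨a1, a2, a3⟩ := hedge _ _ hw hx h
        refine ⟨r, rfl, Relation.ReflTransGen.head ⟨a2, a1, ?_⟩ (hreach w hw)⟩
        rwa [Finset.pair_comm]
    · refine ⟨∅, by simp, by simp, ?_⟩
      rintro v (hv | ⟨-, w, hw, -⟩)
      · exact (hne ⟨v, hv⟩).elim
      · exact (hne ⟨w, hw⟩).elim

end Triangulation

/-! ### The blow-up -/

section BlowUp

variable {n : ℕ} {T T' : Set (Finset ℕ)} {β : ℕ}

lemma emb_mono {i j : ℕ} (h : i ≤ j) : emb n T T' β i ≤ emb n T T' β j := by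
  refine add_le_add h (Nat.mul_le_mul_left _ (Set.ncard_le_ncard ?_ ?_))
  · exact fun a ha => ⟨ha.1, lt_of_lt_of_le ha.2 h⟩
  · exact (Set.finite_Iio j).subset fun a ha => ha.2

lemma emb_strictMono {i j : ℕ} (h : i < j) : emb n T T' β i < emb n T T' β j := by
  refine add_lt_add_of_lt_of_le h (Nat.mul_le_mul_left _ (Set.ncard_le_ncard ?_ ?_))
  · exact fun a ha => ⟨ha.1, lt_trans ha.2 h⟩
  · exact (Set.finite_Iio j).subset fun a ha => ha.2

lemma emb_succ {a : ℕ} (ha : a ∈ leftSet n T T') :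
    emb n T T' β (a + 1) = emb n T T' β a + β + 1 := by
  have h : {x ∈ leftSet n T T' | x < a + 1} = insert a {x ∈ leftSet n T T' | x < a} := by
    ext x
    simp only [Set.mem_ofPred_eq, Set.mem_insert_iff]
    constructor
    · rintro ⟨h1, h2⟩
      rcases eq_or_ne x a with h3 | h3
      · exact Or.inl h3
      · exact Or.inr ⟨h1, by omega⟩
    · rintro (rfl | ⟨h1, h2⟩)
      · exact ⟨ha, by omega⟩
      · exact ⟨h1, by omega⟩
  have hfin : {x ∈ leftSet n T T' | x < a}.Finite :=
    (Set.finite_Iio a).subset fun x hx => hx.2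
  unfold emb
  rw [h, Set.ncard_insert_of_notMem (fun hc => lt_irrefl a hc.2) hfin]
  ring

/-- An original vertex `i` is never embedded strictly inside a subdivided spine edge. -/
lemma emb_outside {a i : ℕ} (ha : a ∈ leftSet n T T') :
    (i ≤ a ∧ emb n T T' β i ≤ emb n T T' β a) ∨
      (a + 1 ≤ i ∧ emb n T T' β a + β + 1 ≤ emb n T T' β i) := by
  rcases le_or_gt i a with h | h
  · exact Or.inl ⟨h, emb_mono h⟩
  · exact Or.inr ⟨h, emb_succ (β := β) ha ▸ emb_mono h⟩

lemma leftSet_of_gamma {p : ℕ × ℕ × ℕ} (hp : p ∈ Gamma n T T') : p.1 ∈ leftSet n T T' :=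
  ⟨p.2.1, p.2.2, hp⟩

/-- A spine edge of a triangulation has at most one triangle on it. -/
lemma apex_unique {S : Set (Finset ℕ)} (hS : IsTriangulation n S) {a u v : ℕ}
    (hu : IsTriangle S a (a + 1) u) (hv : IsTriangle S a (a + 1) v) : u = v := by
  -- for apexes `x < y`, the edges `{a, x}` and `{a + 1, y}` cross if `x` and `y` lie on the same side
  -- of the spine edge, and `{a + 1, x}` and `{a, y}` cross if they do not
  have key : ∀ x y, IsTriangle S a (a + 1) x → IsTriangle S a (a + 1) y → ¬ x < y := by
    rintro x y ⟨-, hx1, hx2, -, hx3, hx4⟩ ⟨-, hy1, hy2, -, hy3, hy4⟩ hxy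
    rcases lt_or_gt_of_ne hx2 with h | h
    · exact hS.not_cross hx4 hy3 (by omega) (by omega) (by omega)
    · rw [Finset.pair_comm] at hx3 hx4
      rcases lt_or_gt_of_ne hy2 with h' | h'
      · exact hS.not_cross hx3 hy4 (by omega) (by omega) (by omega)
      · rw [Finset.pair_comm] at hy3 hy4
        exact hS.not_cross hx4 hy3 (by omega) (by omega) (by omega)
  have h1 := key u v hu hv
  have h2 := key v u hv hu
  omega

/-- Distinct triangle pairs have distinct spine edges. -/
lemma gamma_ext (hT : IsTriangulation n T) (hT' : IsTriangulation n T') {p q : ℕ × ℕ × ℕ}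
    (hp : p ∈ Gamma n T T') (hq : q ∈ Gamma n T T') (h : p.1 = q.1) : p = q := by
  obtain ⟨a, u, u'⟩ := p
  obtain ⟨b, v, v'⟩ := q
  obtain rfl : a = b := h
  obtain ⟨-, -, -, h1, h2, -⟩ := hp
  obtain ⟨-, -, -, h3, h4, -⟩ := hq
  obtain rfl := apex_unique hT h1 h3
  obtain rfl := apex_unique hT' h2 h4
  rfl

/-- The intervals of two triangle pairs are non-overlapping. -/
lemma intervals_disjoint {a b : ℕ} (ha : a ∈ leftSet n T T') (hb : b ∈ leftSet n T T')
    (h : a ≠ b) :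
    emb n T T' β a + β + 1 ≤ emb n T T' β b ∨ emb n T T' β b + β + 1 ≤ emb n T T' β a := by
  rcases emb_outside (β := β) (i := b) ha with h1 | h1
  · rcases emb_outside (β := β) (i := a) hb with h2 | h2
    · omega
    · exact Or.inr h2.2
  · exact Or.inl h1.2

/-- The common shape of `βT` and `βT'`: the edges of `X` that are not subdivided, the pieces of
the subdivided spine edges, and one fan with apex `c q` for each triangle pair `q`. -/
def blowWith (n : ℕ) (T T' : Set (Finset ℕ)) (β : ℕ) (X : Set (Finset ℕ))
    (c : ℕ × ℕ × ℕ → ℕ) : Set (Finset ℕ) :=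
  {E | ∃ i j : ℕ, ({i, j} : Finset ℕ) ∈ X ∧
      (¬ ∃ a ∈ leftSet n T T', ({i, j} : Finset ℕ) = {a, a + 1}) ∧
      E = ({emb n T T' β i, emb n T T' β j} : Finset ℕ)} ∪
  {E | ∃ a ∈ leftSet n T T', ∃ k : ℕ, k ≤ β ∧
      E = ({emb n T T' β a + k, emb n T T' β a + k + 1} : Finset ℕ)} ∪
  ⋃ p ∈ Gamma n T T', {E | ∃ k : ℕ, 1 ≤ k ∧ k ≤ β ∧
    E = ({emb n T T' β (c p), emb n T T' β p.1 + k} : Finset ℕ)}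

/-- An edge of a blow-up from a subdivision vertex of `p` to a vertex outside the closed interval
of `p` belongs to the fan of `p`. -/
lemma mem_fan_of_mem_blow (hT : IsTriangulation n T) (hT' : IsTriangulation n T')
    {X : Set (Finset ℕ)} {c : ℕ × ℕ × ℕ → ℕ} {p : ℕ × ℕ × ℕ} (hp : p ∈ Gamma n T T') {w x : ℕ}
    (h1 : emb n T T' β p.1 < w) (h2 : w < emb n T T' β p.1 + β + 1)
    (hx : x < emb n T T' β p.1 ∨ emb n T T' β p.1 + β + 1 < x)
    (h : ({w, x} : Finset ℕ) ∈ blowWith n T T' β X c) :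
    ∃ k : ℕ, 1 ≤ k ∧ k ≤ β ∧
      ({w, x} : Finset ℕ) = ({emb n T T' β (c p), emb n T T' β p.1 + k} : Finset ℕ) := by
  have hpl := leftSet_of_gamma hp
  rcases h with (⟨i, j, -, -, h⟩ | ⟨a, ha, k, hk, h⟩) | h
  · have hw : w ∈ ({emb n T T' β i, emb n T T' β j} : Finset ℕ) := h ▸ by simp
    simp only [Finset.mem_insert, Finset.mem_singleton] at hw
    have hi := emb_outside (β := β) (i := i) hpl
    have hj := emb_outside (β := β) (i := j) hpl
    omega
  · have hw : w ∈ ({emb n T T' β a + k, emb n T T' β a + k + 1} : Finset ℕ) := h ▸ by simp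
    have hx' : x ∈ ({emb n T T' β a + k, emb n T T' β a + k + 1} : Finset ℕ) := h ▸ by simp
    simp only [Finset.mem_insert, Finset.mem_singleton] at hw hx'
    by_cases hap : a = p.1
    · subst hap
      omega
    · have := intervals_disjoint (β := β) ha hpl hap
      omega
  · simp only [Set.mem_iUnion] at h
    obtain ⟨q, hq, k, hk1, hk2, h⟩ := h
    have hw : w ∈ ({emb n T T' β (c q), emb n T T' β q.1 + k} : Finset ℕ) := h ▸ by simp
    simp only [Finset.mem_insert, Finset.mem_singleton] at hw
    by_cases hqp : q.1 = p.1
    · obtain rfl := gamma_ext hT hT' hq hp hqp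
      exact ⟨k, hk1, hk2, h⟩
    · have h3 := intervals_disjoint (β := β) (leftSet_of_gamma hq) hpl hqp
      have h4 := emb_outside (β := β) (i := c q) hpl
      omega

lemma mem_fanT_of_mem_blowT (hT : IsTriangulation n T) (hT' : IsTriangulation n T')
    {p : ℕ × ℕ × ℕ} (hp : p ∈ Gamma n T T') {w x : ℕ}
    (h1 : emb n T T' β p.1 < w) (h2 : w < emb n T T' β p.1 + β + 1)
    (hx : x < emb n T T' β p.1 ∨ emb n T T' β p.1 + β + 1 < x)
    (h : ({w, x} : Finset ℕ) ∈ blowT n T T' β) : ({w, x} : Finset ℕ) ∈ fanT n T T' β p :=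
  mem_fan_of_mem_blow (X := T) (c := fun q => q.2.1) hT hT' hp h1 h2 hx h

lemma mem_fanT'_of_mem_blowT' (hT : IsTriangulation n T) (hT' : IsTriangulation n T')
    {p : ℕ × ℕ × ℕ} (hp : p ∈ Gamma n T T') {w x : ℕ}
    (h1 : emb n T T' β p.1 < w) (h2 : w < emb n T T' β p.1 + β + 1)
    (hx : x < emb n T T' β p.1 ∨ emb n T T' β p.1 + β + 1 < x)
    (h : ({w, x} : Finset ℕ) ∈ blowT' n T T' β) : ({w, x} : Finset ℕ) ∈ fanT' n T T' β p :=
  mem_fan_of_mem_blow (X := T') (c := fun q => q.2.2) hT hT' hp h1 h2 hx h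

/-- The apex of `Δ` is embedded outside the closed interval of the pair. -/
lemma apex_outside {p : ℕ × ℕ × ℕ} (hp : p ∈ Gamma n T T') :
    emb n T T' β p.2.1 < emb n T T' β p.1 ∨
      emb n T T' β p.1 + β + 1 < emb n T T' β p.2.1 := by
  obtain ⟨-, -, -, ⟨-, h1, h2, -⟩, -⟩ := id hp
  rw [← emb_succ (β := β) (leftSet_of_gamma hp)]
  rcases lt_or_gt_of_ne h2 with h | h
  · exact Or.inr (emb_strictMono (by omega))
  · exact Or.inl (emb_strictMono h)

/-! ### The moment at which the fan of an indirect pair is gone -/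

/-- For an indirect pair, the triangulation at time `gone` is a triangulation of the blown-up
polygon that contains no edge of either fan, and the interval of the pair lies in the polygon. -/
lemma indirect_at_gone (hT : IsTriangulation n T) (hT' : IsTriangulation n T') (hβ : 1 ≤ β)
    {ℓ : ℕ} {g : ℕ → Set (Finset ℕ)}
    (hF : IsFlipSeq (blowSize n T T' β) (blowT n T T' β) (blowT' n T T' β) ℓ g)
    {p : ℕ × ℕ × ℕ} (hp : p ∈ Gamma n T T') (hd : ¬ DirectPair n T T' β g p) :
    IsTriangulation (blowSize n T T' β) (g (gone n T T' β g p)) ∧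
      (∀ E ∈ fanT n T T' β p, E ∉ g (gone n T T' β g p)) ∧
      (∀ E ∈ fanT' n T T' β p, E ∉ g (gone n T T' β g p)) ∧
      emb n T T' β p.1 + β + 1 < blowSize n T T' β := by
  obtain ⟨h0, hℓ, hflip⟩ := hF
  have hd' : ∀ a ≤ gone n T T' β g p, ∀ E ∈ fanT' n T T' β p, E ∉ g a :=
    fun a ha E hE hEa => hd ⟨a, ha, E, hE, hEa⟩
  -- a fan edge of `Δ` surviving in `βT'` would lie in both fans, making the pair direct at time 0
  have hmem : ∀ E ∈ fanT n T T' β p, E ∉ g ℓ := by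
    intro E hE hEℓ
    have hE0 : E ∈ g 0 := by
      rw [h0]
      exact Or.inr (Set.mem_biUnion hp hE)
    obtain ⟨k, hk1, hk2, rfl⟩ := hE
    rw [hℓ, Finset.pair_comm] at hEℓ
    have := mem_fanT'_of_mem_blowT' hT hT' hp (by omega) (by omega) (apex_outside hp) hEℓ
    rw [Finset.pair_comm] at this
    exact hd' 0 (Nat.zero_le _) _ this hE0
  have hgone : ∀ E ∈ fanT n T T' β p, E ∉ g (gone n T T' β g p) :=
    Nat.sInf_mem (s := {t : ℕ | ∀ E ∈ fanT n T T' β p, E ∉ g t}) ⟨ℓ, hmem⟩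
  have hle : gone n T T' β g p ≤ ℓ :=
    Nat.sInf_le (s := {t : ℕ | ∀ E ∈ fanT n T T' β p, E ∉ g t}) hmem
  have hpos : 0 < ℓ := by
    by_contra hc
    obtain rfl : ℓ = 0 := by omega
    have hE : ({emb n T T' β p.2.2, emb n T T' β p.1 + 1} : Finset ℕ) ∈ fanT' n T T' β p :=
      ⟨1, le_rfl, hβ, rfl⟩
    refine hd' 0 (Nat.zero_le _) _ hE ?_
    rw [hℓ]
    exact Or.inr (Set.mem_biUnion hp hE)
  refine ⟨?_, hgone, hd' _ le_rfl, ?_⟩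
  · rcases lt_or_eq_of_le hle with h | h
    · exact (hflip _ h).1
    · have := (hflip (ℓ - 1) (by omega)).2.1
      rw [Nat.sub_add_cancel hpos] at this
      rwa [h]
  · -- the last piece of the subdivided spine edge is an edge of the triangulation `g 0`
    refine (hflip 0 hpos).1.lt_right (i := emb n T T' β p.1 + β) ?_
    rw [h0]
    exact Or.inl (Or.inr ⟨p.1, leftSet_of_gamma hp, β, le_rfl, rfl⟩)

lemma subVerts_eq_Ioo (p : ℕ × ℕ × ℕ) :
    subVerts n T T' β p = Set.Ioo (emb n T T' β p.1) (emb n T T' β p.1 + β + 1) := by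
  ext v
  constructor
  · rintro ⟨k, h1, h2, rfl⟩
    exact ⟨by omega, by omega⟩
  · rintro ⟨h1, h2⟩
    exact ⟨v - emb n T T' β p.1, by omega, by omega, by omega⟩

end BlowUp

/-- For every indirect pair `p` of a flip sequence `F` there exist
a subgraph `G(p) = (VG p, EG p)` of the triangulation `T_{gone(Δ_p)}`, a set
`KK p` of edges of `T_{gone(Δ_p)}`, and an integer `l p`, such that: `KK p`
consists of `l p` edges whose endpoints are two non-consecutive vertices of
`V̄(Δ_p)`; `G(p)` contains `β − l p` vertices of `V(Δ_p)`, contains no edge of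
`βT ∪ βT'`, and has at most `3n` connected components; `KK p ∩ E(G(p)) = ∅`; and
for distinct indirect pairs `p ≠ q`, `KK p ∩ E(G(q)) = ∅` and `KK p ∩ KK q = ∅`. -/
theorem indirect_pairs_disjoint_witnesses
    (n : ℕ) (hn : 3 ≤ n) (T T' : Set (Finset ℕ))
    (hT : IsTriangulation n T) (hT' : IsTriangulation n T')
    (β : ℕ) (hβ : 1 ≤ β) (ℓ : ℕ) (g : ℕ → Set (Finset ℕ))
    (hF : IsFlipSeq (blowSize n T T' β) (blowT n T T' β) (blowT' n T T' β) ℓ g) :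
    ∃ (VG : ℕ × ℕ × ℕ → Set ℕ) (EG KK : ℕ × ℕ × ℕ → Set (Finset ℕ))
      (l : ℕ × ℕ × ℕ → ℕ),
      (∀ p ∈ Gamma n T T', ¬ DirectPair n T T' β g p →
        -- `KK p` consists of `l p` edges of `T_{gone(Δ_p)}` whose endpoints are
        -- two non-consecutive vertices of `V̄(Δ_p)`
        KK p ⊆ g (gone n T T' β g p) ∧ (KK p).ncard = l p ∧
        (∀ E ∈ KK p, ∃ k m : ℕ, k + 1 < m ∧ m ≤ β + 1 ∧
            E = ({emb n T T' β p.1 + k, emb n T T' β p.1 + m} : Finset ℕ)) ∧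
        -- `G(p)` is a subgraph of `T_{gone(Δ_p)}`
        (VG p ⊆ {v : ℕ | v < blowSize n T T' β}) ∧
        EG p ⊆ g (gone n T T' β g p) ∧ (∀ E ∈ EG p, ∀ v ∈ E, v ∈ VG p) ∧
        -- `G(p)` contains `β − l p` vertices of `V(Δ_p)` …
        l p ≤ β ∧ (subVerts n T T' β p ∩ VG p).ncard = β - l p ∧
        -- … no edges from `βT ∪ βT'` …
        (∀ E ∈ EG p, E ∉ blowT n T T' β ∧ E ∉ blowT' n T T' β) ∧
        -- … and has at most `3n` connected components
        (∃ reps : Set ℕ, reps ⊆ VG p ∧ reps.ncard ≤ 3 * n ∧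
          ∀ v ∈ VG p, ∃ r ∈ reps, GReach (VG p) (EG p) v r) ∧
        -- `KK p ∩ E(G(p)) = ∅`
        KK p ∩ EG p = ∅) ∧
      -- disjointness across distinct indirect pairs
      (∀ p ∈ Gamma n T T', ∀ q ∈ Gamma n T T',
        ¬ DirectPair n T T' β g p → ¬ DirectPair n T T' β g q → p ≠ q →
          KK p ∩ EG q = ∅ ∧ KK p ∩ KK q = ∅) := by
  have hw : ∀ p : ℕ × ℕ × ℕ, ∃ (VG : Set ℕ) (EG KK : Set (Finset ℕ)),
      p ∈ Gamma n T T' → ¬ DirectPair n T T' β g p →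
      KK ⊆ g (gone n T T' β g p) ∧
      (∀ E ∈ KK, ∃ i j, emb n T T' β p.1 ≤ i ∧ i + 1 < j ∧ j ≤ emb n T T' β p.1 + β + 1 ∧
        E = {i, j}) ∧
      VG ⊆ {v | v < blowSize n T T' β} ∧ EG ⊆ g (gone n T T' β g p) ∧
      (∀ E ∈ EG, ∀ v ∈ E, v ∈ VG) ∧
      KK.ncard + (Set.Ioo (emb n T T' β p.1) (emb n T T' β p.1 + β + 1) ∩ VG).ncard
        = emb n T T' β p.1 + β + 1 - emb n T T' β p.1 - 1 ∧
      (∀ E ∈ EG, ∃ w x, emb n T T' β p.1 < w ∧ w < emb n T T' β p.1 + β + 1 ∧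
        (x < emb n T T' β p.1 ∨ emb n T T' β p.1 + β + 1 < x) ∧ E = {w, x}) ∧
      ∃ reps : Set ℕ, reps ⊆ VG ∧ reps.ncard ≤ 1 ∧
        ∀ v ∈ VG, ∃ r ∈ reps, GReach VG EG v r := by
    intro p
    by_cases h : p ∈ Gamma n T T' ∧ ¬ DirectPair n T T' β g p
    · obtain ⟨h1, -, -, h4⟩ := indirect_at_gone hT hT' hβ hF h.1 h.2
      obtain ⟨VG, EG, KK, hh⟩ := exists_witness (A := emb n T T' β p.1) h1 h4
      exact ⟨VG, EG, KK, fun _ _ => hh⟩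
    · exact ⟨∅, ∅, ∅, fun h1 h2 => absurd ⟨h1, h2⟩ h⟩
  choose VG EG KK hw using hw
  refine ⟨VG, EG, KK, fun p => (KK p).ncard, ?_, ?_⟩
  · intro p hp hd
    obtain ⟨w1, w2, w3, w4, w5, w6, w7, reps, r1, r2, r3⟩ := hw p hp hd
    obtain ⟨-, g2, g3, -⟩ := indirect_at_gone hT hT' hβ hF hp hd
    refine ⟨w1, rfl, ?_, w3, w4, w5, ?_, ?_, ?_, ⟨reps, r1, by omega, r3⟩, ?_⟩
    · intro E hE
      obtain ⟨i, j, h1, h2, h3, rfl⟩ := w2 E hE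
      refine ⟨i - emb n T T' β p.1, j - emb n T T' β p.1, by omega, by omega, ?_⟩
      rw [Nat.add_sub_cancel' h1, Nat.add_sub_cancel' (by omega)]
    · show (KK p).ncard ≤ β
      omega
    · rw [subVerts_eq_Ioo]
      show _ = β - (KK p).ncard
      omega
    · intro E hE
      have hEg := w4 hE
      obtain ⟨w, x, h1, h2, h3, rfl⟩ := w7 E hE
      exact ⟨fun h => g2 _ (mem_fanT_of_mem_blowT hT hT' hp h1 h2 h3 h) hEg,
        fun h => g3 _ (mem_fanT'_of_mem_blowT' hT hT' hp h1 h2 h3 h) hEg⟩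
    · rw [Set.eq_empty_iff_forall_notMem]
      rintro E ⟨hK, hE⟩
      obtain ⟨i, j, h1, h2, h3, rfl⟩ := w2 E hK
      obtain ⟨w, x, f1, f2, f3, h⟩ := w7 _ hE
      have hx : x ∈ ({i, j} : Finset ℕ) := h ▸ by simp
      simp only [Finset.mem_insert, Finset.mem_singleton] at hx
      omega
  · intro p hp q hq hdp hdq hpq
    have hI := intervals_disjoint (β := β) (leftSet_of_gamma hp) (leftSet_of_gamma hq)
      (fun h => hpq (gamma_ext hT hT' hp hq h))
    obtain ⟨-, w2, -⟩ := hw p hp hdp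
    obtain ⟨-, v2, -, -, -, -, v7, -⟩ := hw q hq hdq
    constructor
    · rw [Set.eq_empty_iff_forall_notMem]
      rintro E ⟨hK, hE⟩
      obtain ⟨i, j, h1, h2, h3, rfl⟩ := w2 E hK
      obtain ⟨w, x, f1, f2, -, h⟩ := v7 _ hE
      have hx : w ∈ ({i, j} : Finset ℕ) := h ▸ by simp
      simp only [Finset.mem_insert, Finset.mem_singleton] at hx
      omega
    · rw [Set.eq_empty_iff_forall_notMem]
      rintro E ⟨hK, hE⟩
      obtain ⟨i, j, h1, h2, h3, rfl⟩ := w2 E hK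
      obtain ⟨i', j', f1, f2, f3, h⟩ := v2 _ hE
      obtain ⟨rfl, rfl⟩ := pair_eq_of_lt (by omega) (by omega) h
      omega
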